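/- arXiv:1908.05456 — 2 statements merged into one kernel-verified Lean document; each statement's English description precedes it below -/
import Mathlib

section
/- Let q be a prime power with q ≡ 3 (mod 4) and q ≠ 3, let m be a positive integer, and suppose PSL(2,q) is (2,m)-generated, i.e. there exists a generating pair (h1,h2) of H = PSL(2,q) with h1² = h2^m = 1. Then, with G = C_2 ∗ C_m, the group H is a homomorphic image of G and there exists a generating pair (h1,h2) of H such that for every group homomorphism θ : G → H and every generating pair (g1,g2) of G one has (θ(g1), θ(g2)) ≠ (h1,h2). -/
/-- `SL(2,F)` -/
abbrev SL2 (F : Type) [Field F] : Type := Matrix.SpecialLinearGroup (Fin 2) F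

/-- `PSL(2,F)`, the quotient of `SL(2,F)` by its centre `{±I}`. -/
abbrev PSL2 (F : Type) [Field F] : Type := SL2 F ⧸ Subgroup.center (SL2 F)

/-- The cyclic group of order `m`. -/
abbrev Cyc (m : ℕ) : Type := Multiplicative (ZMod m)

/-
Let `-1` be a non-square in `F` and let `η ∈ F`. The generic pair of matrices of determinant `1`
with traces `0` and `2η` lives in a quaternion algebra `Q` over `F[X]`, where `X` is half the trace
of the product. If the images of the standard generators of `C₂ ∗ Cₘ` under `θ` lift to matrices
with traces `0` and `2η` whose product has trace `2σ`, then `θ` factors through the unitary elements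
of `Q` modulo `±1`, followed by the specialization `X = σ`.

A generating pair of the free product gives elements `x`, `z` that generate `Q`. Hence the
commutators of `x`, `z` and of the standard generators generate the same ideal, and the quotient of
their norms is a unit of `F[X]`, that is, a constant `c`. The constant is computed at `X = 0`, where
`x` and `z` become homogeneous for a `ℤ/2`-grading: there `c = α²` with `τ² = 1 + (η² - 1)α²` for
some `τ`, and one of `x`, `z` has trace `0`.

At `X = σ` the norm of the commutator is `-4(σ² + η² - 1)c`. If it equals `4`, then `σ²α² + τ² = 0`,
so `σ = 0` and one of the two images of the generating pair has trace `0`. It remains to find a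
generating pair of `PSL(2, F)` with non-zero traces and `det (M₁M₂ - M₂M₁) = 4`.
-/

open Matrix hiding transvection
open Polynomial (X C)
open Matrix.SpecialLinearGroup (transvection diag2 coe_mul coe_inv coe_neg diag2_coe')
open scoped MatrixGroups Polynomial Quaternion

section NonsquareNegOne

variable {F : Type*} [Field F]

lemma two_ne_zero_of_not_isSquare_neg_one (hF : ¬ IsSquare (-1 : F)) : (2 : F) ≠ 0 :=
  fun h ↦ hF ⟨1, by linear_combination -h⟩

lemma four_ne_zero_of_not_isSquare_neg_one (hF : ¬ IsSquare (-1 : F)) : (4 : F) ≠ 0 := by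
  simpa [show (4 : F) = 2 * 2 by norm_num] using two_ne_zero_of_not_isSquare_neg_one hF

lemma eq_zero_of_sq_add_sq_eq_zero (hF : ¬ IsSquare (-1 : F)) {x y : F}
    (h : x ^ 2 + y ^ 2 = 0) : y = 0 := by
  by_contra hy
  exact hF ⟨x / y, by field_simp; linear_combination -h⟩

lemma sq_add_one_ne_zero (hF : ¬ IsSquare (-1 : F)) (x : F) : x ^ 2 + 1 ≠ 0 :=
  fun h ↦ hF ⟨x, by linear_combination -h⟩

lemma exists_eq_sq_or_eq_neg_sq [Finite F] (hF : ¬ IsSquare (-1 : F)) (x : F) :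
    ∃ z, x = z ^ 2 ∨ x = -z ^ 2 := by
  have := Fintype.ofFinite F
  classical
  by_cases hx : IsSquare x
  · obtain ⟨z, rfl⟩ := hx
    exact ⟨z, Or.inl (sq z).symm⟩
  · have hneg : IsSquare (-x) := by
      have hx0 : x ≠ 0 := fun h ↦ hx (h ▸ IsSquare.zero)
      rw [← quadraticChar_one_iff_isSquare (neg_ne_zero.mpr hx0), neg_eq_neg_one_mul, map_mul,
        quadraticChar_neg_one_iff_not_isSquare.mpr hF,
        quadraticChar_neg_one_iff_not_isSquare.mpr hx, neg_one_mul, neg_neg]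
    obtain ⟨z, hz⟩ := hneg
    exact ⟨z, Or.inr (by linear_combination -hz)⟩

end NonsquareNegOne

section Generation

variable {F : Type*} [Field F] {H : Subgroup SL(2, F)}

lemma transvection_zero_one_coe (x : F) :
    (transvection zero_ne_one x : SL(2, F)).1 = !![1, x; 0, 1] := by
  ext i j; fin_cases i <;> fin_cases j <;> simp [Matrix.SpecialLinearGroup.transvection_coe]

lemma diag2_mul_transvection_mul_inv {z : F} (hz : z ≠ 0) (x : F) :
    diag2 z hz * transvection zero_ne_one x * (diag2 z hz)⁻¹ =
      transvection zero_ne_one (z ^ 2 * x) := by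
  rw [mul_inv_eq_iff_eq_mul]
  refine Subtype.ext ?_
  simp only [coe_mul, diag2_coe', transvection_zero_one_coe, mul_fin_two]
  congr! 3 <;> field_simp <;> simp

lemma transvection_zero_one_mem (h2 : (2 : F) ≠ 0) (hdiag : ∀ z hz, diag2 z hz ∈ H) {y : F}
    (hy : y ≠ 0) (hyH : transvection zero_ne_one y ∈ H) (x : F) :
    transvection zero_ne_one x ∈ H := by
  have hsq (z : F) : transvection zero_ne_one (z ^ 2 * y) ∈ H := by
    obtain rfl | hz := eq_or_ne z 0
    · simp
    · rw [← diag2_mul_transvection_mul_inv hz]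
      exact H.mul_mem (H.mul_mem (hdiag z hz) hyH) (H.inv_mem (hdiag z hz))
  have hx : x = ((x / y + 1) / 2) ^ 2 * y + -(((x / y - 1) / 2) ^ 2 * y) := by
    field_simp; ring
  rw [hx, Matrix.SpecialLinearGroup.transvection_add, ← Matrix.SpecialLinearGroup.transvection_inv]
  exact H.mul_mem (hsq _) (H.inv_mem (hsq _))

lemma transvection_one_zero_mem (hdiag : ∀ z hz, diag2 z hz ∈ H)
    (hupper : ∀ x, transvection zero_ne_one x ∈ H) {M : SL(2, F)} (hM : M ∈ H)
    (hM10 : M 1 0 ≠ 0) (y : F) : transvection one_ne_zero y ∈ H := by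
  obtain rfl | hy := eq_or_ne y 0
  · simp
  have hu : M 1 0 / y ≠ 0 := div_ne_zero hM10 hy
  suffices transvection one_ne_zero y =
      transvection zero_ne_one ((1 - M 1 0 / y * M 0 0) / y) * (diag2 _ hu * M) *
        transvection zero_ne_one ((1 - y / M 1 0 * M 1 1) / y) by
    rw [this]
    exact H.mul_mem (H.mul_mem (hupper _) (H.mul_mem (hdiag _ hu) hM)) (hupper _)
  have hdet := M.det_coe
  rw [det_fin_two] at hdet
  refine Subtype.ext ?_
  simp only [coe_mul, diag2_coe', transvection_zero_one_coe]
  rw [(M : Matrix (Fin 2) (Fin 2) F).eta_fin_two]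
  simp only [mul_fin_two]
  ext i j
  fin_cases i <;> fin_cases j <;> simp [Matrix.SpecialLinearGroup.transvection_coe] <;> field_simp
  · ring
  · linear_combination M 1 0 * y * hdet
  · ring

lemma eq_top_of_diag2_mem_of_transvection_mem (h2 : (2 : F) ≠ 0)
    (hdiag : ∀ z hz, diag2 z hz ∈ H) {x : F} (hx : x ≠ 0) (hxH : transvection zero_ne_one x ∈ H)
    {M : SL(2, F)} (hM : M ∈ H) (hM10 : M 1 0 ≠ 0) : H = ⊤ := by
  have hupper := transvection_zero_one_mem h2 hdiag hx hxH
  have hlower := transvection_one_zero_mem hdiag hupper hM hM10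
  refine eq_top_iff.mpr fun g _ ↦ SL2.transvection_induction (· ∈ H) ?_ (fun _ _ ↦ H.mul_mem) g
  intro i j hij c
  fin_cases i <;> fin_cases j
  · exact absurd rfl hij
  · exact hupper c
  · exact hlower c
  · exact absurd rfl hij

lemma exists_conj_eq_transvection {Y g : SL(2, F)} (hY : Y ≠ 1)
    (hfix : Y • g • (Pi.single 0 1 : Fin 2 → F) = g • Pi.single 0 1) :
    ∃ x ≠ 0, g⁻¹ * Y * g = transvection zero_ne_one x := by
  set Z := g⁻¹ * Y * g with hZ
  have hcol : Z • (Pi.single 0 1 : Fin 2 → F) = Pi.single 0 1 := by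
    rw [hZ, mul_smul, mul_smul, hfix, inv_smul_smul]
  replace hcol : (Z : Matrix (Fin 2) (Fin 2) F).col 0 = Pi.single 0 1 := by
    rwa [← mulVec_single_one]
  have h00 : Z 0 0 = 1 := by simpa using congrFun hcol 0
  have h10 : Z 1 0 = 0 := by simpa using congrFun hcol 1
  have h11 : Z 1 1 = 1 := by
    have hdet := Z.det_coe
    rwa [det_fin_two, h00, h10, one_mul, mul_zero, sub_zero] at hdet
  have hZ_eq : Z = transvection zero_ne_one (Z 0 1) := by
    ext i j
    rw [transvection_zero_one_coe]
    fin_cases i <;> fin_cases j <;> simp [h00, h10, h11]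
  refine ⟨Z 0 1, fun h01 ↦ hY ?_, hZ_eq⟩
  rw [h01, Matrix.SpecialLinearGroup.transvection_coeff_zero, hZ] at hZ_eq
  rwa [mul_assoc, inv_mul_eq_one, eq_comm, mul_eq_right] at hZ_eq

/-- The symmetric matrix that, for `a = exp x`, has entries `coth x` and `1 / sinh x`. It is chosen
so that its commutator with `diag(a, a⁻¹)` has trace `-2`. -/
def symmetricPartner (a : F) (ha : a ^ 2 ≠ 1) : SL(2, F) :=
  ⟨(a ^ 2 - 1)⁻¹ • !![a ^ 2 + 1, 2 * a; 2 * a, a ^ 2 + 1], by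
    have := sub_ne_zero.mpr ha
    rw [det_smul, det_fin_two_of, Fintype.card_fin]
    field_simp
    ring⟩

lemma symmetricPartner_coe {a : F} (ha : a ^ 2 ≠ 1) :
    (symmetricPartner a ha : Matrix (Fin 2) (Fin 2) F) =
      !![(a ^ 2 + 1) / (a ^ 2 - 1), 2 * a / (a ^ 2 - 1);
        2 * a / (a ^ 2 - 1), (a ^ 2 + 1) / (a ^ 2 - 1)] := by
  simp [symmetricPartner, inv_mul_eq_div]

lemma neg_commutator_coe {a : F} (ha : a ≠ 0) (ha1 : a ^ 2 ≠ 1) :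
    ((-(diag2 a ha * symmetricPartner a ha1 * (diag2 a ha)⁻¹ * (symmetricPartner a ha1)⁻¹) :
      SL(2, F)) : Matrix (Fin 2) (Fin 2) F) =
      1 + (2 * ((a ^ 2 + 1) / (a ^ 2 - 1))) • !![1, -a; a⁻¹, -1] := by
  have := sub_ne_zero.mpr ha1
  simp only [coe_neg, coe_mul, coe_inv, diag2_coe', symmetricPartner_coe, adjugate_fin_two_of,
    mul_fin_two]
  ext i j
  fin_cases i <;> fin_cases j <;> simp <;> field_simp <;> ring

lemma neg_commutator_smul_col {a : F} (ha : a ≠ 0) (ha1 : a ^ 2 ≠ 1) {v : Fin 2 → F}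
    (hv : v 0 = a * v 1) :
    -(diag2 a ha * symmetricPartner a ha1 * (diag2 a ha)⁻¹ * (symmetricPartner a ha1)⁻¹) • v
      = v := by
  change Matrix.mulVec _ v = v
  rw [neg_commutator_coe, add_mulVec, one_mulVec, add_eq_left, smul_mulVec]
  ext i
  fin_cases i <;> simp [vecHead, vecTail, hv, ha]

lemma exists_mem_smul_single_zero [Finite F] (hF : ¬ IsSquare (-1 : F)) {a : F} (ha : a ≠ 0)
    (ha1 : a ^ 2 ≠ 1) (hdiag : ∀ z hz, diag2 z hz ∈ H) (hH : symmetricPartner a ha1 ∈ H) :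
    ∃ g ∈ H, (g • (Pi.single 0 1 : Fin 2 → F)) 0 = a * (g • (Pi.single 0 1 : Fin 2 → F)) 1 := by
  have h2 := two_ne_zero_of_not_isSquare_neg_one hF
  have hadd := sq_add_one_ne_zero hF a
  have hsub := sub_ne_zero.mpr ha1
  obtain ⟨z, hz⟩ := exists_eq_sq_or_eq_neg_sq hF (2 * a ^ 2 / (a ^ 2 + 1))
  have hz0 : z ≠ 0 := by
    rintro rfl
    simp [h2, ha, hadd] at hz
  rw [div_eq_iff hadd, div_eq_iff hadd] at hz
  have hcol (g : SL(2, F)) : g • (Pi.single 0 1 : Fin 2 → F) = fun i ↦ g i 0 :=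
    mulVec_single_one _ _
  simp only [hcol]
  rcases hz with hz | hz
  · refine ⟨diag2 z hz0 * symmetricPartner a ha1, H.mul_mem (hdiag z hz0) hH, ?_⟩
    simp only [coe_mul, diag2_coe', symmetricPartner_coe, mul_fin_two, of_apply, cons_val',
      cons_val_zero, cons_val_fin_one, cons_val_one]
    field_simp
    linear_combination -hz
  · refine ⟨diag2 z hz0 * (symmetricPartner a ha1)⁻¹,
      H.mul_mem (hdiag z hz0) (H.inv_mem hH), ?_⟩
    simp only [coe_mul, coe_inv, diag2_coe', symmetricPartner_coe, adjugate_fin_two_of, mul_fin_two,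
      of_apply, cons_val', cons_val_zero, cons_val_fin_one, cons_val_one]
    field_simp
    linear_combination hz

lemma eq_top_of_symmetricPartner_mem [Finite F] (hF : ¬ IsSquare (-1 : F)) {a : F} (ha : a ≠ 0)
    (ha1 : a ^ 2 ≠ 1) (hdiag : ∀ z hz, diag2 z hz ∈ H) (hneg : -1 ∈ H)
    (hH : symmetricPartner a ha1 ∈ H) : H = ⊤ := by
  have h2 := two_ne_zero_of_not_isSquare_neg_one hF
  have hadd := sq_add_one_ne_zero hF a
  have hsub := sub_ne_zero.mpr ha1
  -- The commutator has trace `-2`, so `Y` is unipotent, and `g` maps `e₁` to a vector fixed by `Y`.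
  obtain ⟨g, hg, hcol⟩ := exists_mem_smul_single_zero hF ha ha1 hdiag hH
  set Y := -(diag2 a ha * symmetricPartner a ha1 * (diag2 a ha)⁻¹ * (symmetricPartner a ha1)⁻¹)
    with hY
  have hYH : Y ∈ H := by
    rw [hY, ← neg_one_mul]
    exact H.mul_mem hneg (H.mul_mem (H.mul_mem (H.mul_mem (hdiag a ha) hH)
      (H.inv_mem (hdiag a ha))) (H.inv_mem hH))
  have hY1 : Y ≠ 1 := by
    intro h
    have h10 : (Y : Matrix (Fin 2) (Fin 2) F) 1 0 = 0 := by simp [h]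
    rw [hY, neg_commutator_coe] at h10
    simp [h2, ha, hadd, hsub] at h10
  obtain ⟨x, hx, hconj⟩ := exists_conj_eq_transvection hY1 (neg_commutator_smul_col ha ha1 hcol)
  refine eq_top_of_diag2_mem_of_transvection_mem h2 hdiag hx ?_ hH ?_
  · rw [← hconj]
    exact H.mul_mem (H.mul_mem (H.inv_mem hg) hYH) hg
  · simp [symmetricPartner_coe, h2, ha, hsub]

end Generation

section GeneratingPair

variable {F : Type*} [Field F]

lemma diag2_mem_of_forall_mem_zpowers {H : Subgroup SL(2, F)} {u : Fˣ}
    (hu : ∀ v, v ∈ Subgroup.zpowers u) (huH : diag2 (u : F) u.ne_zero ∈ H) (z : F) (hz : z ≠ 0) :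
    diag2 z hz ∈ H := by
  let d : Fˣ →* SL(2, F) := MonoidHom.mk' (fun v ↦ diag2 (v : F) v.ne_zero)
    fun v w ↦ Subtype.ext <| by simp [diag2_coe', mul_comm]
  obtain ⟨n, hn⟩ := Subgroup.mem_zpowers_iff.mp (hu (Units.mk0 z hz))
  have : diag2 z hz = d u ^ n := by rw [← map_zpow, hn]; rfl
  exact this ▸ H.zpow_mem huH n

lemma exists_forall_mem_zpowers_and_sq_ne_one [Finite F] (hcard : 3 < Nat.card F) :
    ∃ u : Fˣ, (∀ v, v ∈ Subgroup.zpowers u) ∧ (u : F) ^ 2 ≠ 1 := by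
  obtain ⟨u, hu⟩ := IsCyclic.exists_generator (α := Fˣ)
  refine ⟨u, hu, fun h ↦ ?_⟩
  have hle : orderOf u ≤ 2 := orderOf_le_of_pow_eq_one two_pos (Units.ext (by simpa using h))
  rw [orderOf_eq_card_of_forall_mem_zpowers hu, Nat.card_units] at hle
  lia

lemma neg_one_mem_center {R : Type*} [CommRing R] : -1 ∈ Subgroup.center SL(2, R) :=
  Matrix.SpecialLinearGroup.mem_center_iff.mpr
    ⟨-1, by simp, by ext i j; fin_cases i <;> fin_cases j <;> simp⟩

lemma closure_diag2_symmetricPartner_eq_top [Finite F] (hF : ¬ IsSquare (-1 : F)) {u : Fˣ}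
    (hu : ∀ v, v ∈ Subgroup.zpowers u) (hu1 : (u : F) ^ 2 ≠ 1) :
    Subgroup.closure {(diag2 (u : F) u.ne_zero : PSL(2, F)), ↑(symmetricPartner (u : F) hu1)}
      = ⊤ := by
  refine Subgroup.comap_injective (QuotientGroup.mk'_surjective _) ?_
  rw [Subgroup.comap_top]
  refine eq_top_of_symmetricPartner_mem hF u.ne_zero hu1
    (diag2_mem_of_forall_mem_zpowers hu (Subgroup.subset_closure (by simp))) ?_
    (Subgroup.subset_closure (by simp))
  rw [Subgroup.mem_comap, QuotientGroup.mk'_apply,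
    (QuotientGroup.eq_one_iff _).mpr neg_one_mem_center]
  exact one_mem _

lemma det_mul_sub_mul_symmetricPartner {a : F} (ha : a ≠ 0) (ha1 : a ^ 2 ≠ 1) :
    (diag2 a ha * symmetricPartner a ha1 - symmetricPartner a ha1 * diag2 a ha :
      Matrix (Fin 2) (Fin 2) F).det = 4 := by
  have := sub_ne_zero.mpr ha1
  rw [diag2_coe', symmetricPartner_coe, mul_fin_two, mul_fin_two, det_fin_two]
  simp only [Matrix.sub_apply, of_apply, cons_val', cons_val_zero, cons_val_fin_one, cons_val_one]
  field_simp
  ring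

lemma exists_closure_eq_top_and_det_mul_sub_mul_eq_four [Finite F] (hF : ¬ IsSquare (-1 : F))
    (hcard : 3 < Nat.card F) :
    ∃ M₁ M₂ : SL(2, F), Subgroup.closure {(M₁ : PSL(2, F)), (M₂ : PSL(2, F))} = ⊤ ∧
      (M₁ : Matrix (Fin 2) (Fin 2) F).trace ≠ 0 ∧ (M₂ : Matrix (Fin 2) (Fin 2) F).trace ≠ 0 ∧
      (M₁ * M₂ - M₂ * M₁ : Matrix (Fin 2) (Fin 2) F).det = 4 := by
  obtain ⟨u, hu, hu1⟩ := exists_forall_mem_zpowers_and_sq_ne_one hcard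
  have h2 := two_ne_zero_of_not_isSquare_neg_one hF
  have hu0 := u.ne_zero
  have hsub := sub_ne_zero.mpr hu1
  have hadd := sq_add_one_ne_zero hF (u : F)
  refine ⟨diag2 u hu0, symmetricPartner u hu1, closure_diag2_symmetricPartner_eq_top hF hu hu1,
    ?_, ?_, det_mul_sub_mul_symmetricPartner hu0 hu1⟩
  · rw [diag2_coe', trace_fin_two_of]
    field_simp
    exact div_ne_zero hadd hu0
  · rw [symmetricPartner_coe, trace_fin_two_of, ← two_mul]
    exact mul_ne_zero h2 (div_ne_zero hadd hsub)

end GeneratingPair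

section AdjoinPair

variable {R A : Type*} [CommRing R] [Ring A] [Algebra R A] {x z : A}

lemma mul_sub_mul_mem_of_adjoin_eq_top (I : Ideal A) [I.IsTwoSided] {s : A}
    (hxz : Algebra.adjoin R {x, z} = ⊤) (hx : x * s - s * x ∈ I) (hz : z * s - s * z ∈ I) (r : A) :
    r * s - s * r ∈ I := by
  induction (hxz ▸ Algebra.mem_top : r ∈ Algebra.adjoin R {x, z}) using
    Algebra.adjoin_induction with
  | mem y hy => rcases hy with rfl | rfl <;> assumption
  | algebraMap c => simp [Algebra.commutes c s]
  | add y y' _ _ hy hy' =>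
    convert I.add_mem hy hy' using 1
    noncomm_ring
  | mul y y' _ _ hy hy' =>
    convert I.add_mem (I.mul_mem_left y hy') (I.mul_mem_right y' hy) using 1
    noncomm_ring

lemma commutator_mem_of_adjoin_eq_top (I : Ideal A) [I.IsTwoSided]
    (hxz : Algebra.adjoin R {x, z} = ⊤) (h : x * z - z * x ∈ I) (r s : A) :
    r * s - s * r ∈ I := by
  have hneg : z * x - x * z ∈ I := by simpa using I.neg_mem h
  have hx (r : A) : r * x - x * r ∈ I :=
    mul_sub_mul_mem_of_adjoin_eq_top I hxz (by simp) hneg r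
  have hz (r : A) : r * z - z * r ∈ I :=
    mul_sub_mul_mem_of_adjoin_eq_top I hxz h (by simp) r
  refine mul_sub_mul_mem_of_adjoin_eq_top I hxz ?_ ?_ r
  · simpa using I.neg_mem (hx s)
  · simpa using I.neg_mem (hz s)

end AdjoinPair

section Quaternion

variable {R : Type*} [CommRing R] {a b : R}

/-- The reduced norm of the quaternion algebra `(a, b)` over `R`. -/
def reducedNorm (x : ℍ[R,a,b]) : R :=
  x.re ^ 2 - a * x.imI ^ 2 - b * x.imJ ^ 2 + a * b * x.imK ^ 2

lemma reducedNorm_mul (x z : ℍ[R,a,b]) :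
    reducedNorm (x * z) = reducedNorm x * reducedNorm z := by
  simp only [reducedNorm, QuaternionAlgebra.re_mul, QuaternionAlgebra.imI_mul,
    QuaternionAlgebra.imJ_mul, QuaternionAlgebra.imK_mul]
  ring

lemma star_mul_self_eq_reducedNorm (x : ℍ[R,a,b]) :
    star x * x = algebraMap R _ (reducedNorm x) := by
  ext <;> simp <;> grind [reducedNorm]

lemma self_mul_star_eq_reducedNorm (x : ℍ[R,a,b]) :
    x * star x = algebraMap R _ (reducedNorm x) := by
  ext <;> simp <;> grind [reducedNorm]

lemma mem_unitary_iff_reducedNorm_eq_one {x : ℍ[R,a,b]} :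
    x ∈ unitary ℍ[R,a,b] ↔ reducedNorm x = 1 := by
  rw [Unitary.mem_iff, star_mul_self_eq_reducedNorm, self_mul_star_eq_reducedNorm, and_self,
    ← map_one (algebraMap R _), QuaternionAlgebra.algebraMap_injective.eq_iff]

/-- The quotient of the norm of the commutator of `x` and `z` by that of the commutator of the
standard generators `i` and `j`. -/
def commutatorFactor (x z : ℍ[R,a,b]) : R :=
  (x.imI * z.imJ - x.imJ * z.imI) ^ 2 - a * (x.imI * z.imK - x.imK * z.imI) ^ 2 -
    b * (x.imJ * z.imK - x.imK * z.imJ) ^ 2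

lemma reducedNorm_commutator (x z : ℍ[R,a,b]) :
    reducedNorm (x * z - z * x) = 4 * a * b * commutatorFactor x z := by
  simp only [reducedNorm, commutatorFactor, QuaternionAlgebra.re_sub, QuaternionAlgebra.imI_sub,
    QuaternionAlgebra.imJ_sub, QuaternionAlgebra.imK_sub, QuaternionAlgebra.re_mul,
    QuaternionAlgebra.imI_mul, QuaternionAlgebra.imJ_mul, QuaternionAlgebra.imK_mul]
  ring

lemma commutator_mul_left (x z : ℍ[R,a,b]) :
    (x * z - z * x) * x = star x * (x * z - z * x) := by
  ext <;> simp <;> ring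

lemma commutator_mul_right (x z : ℍ[R,a,b]) :
    (x * z - z * x) * z = star z * (x * z - z * x) := by
  ext <;> simp <;> ring

lemma isTwoSided_span_commutator {x z : ℍ[R,a,b]} (hxz : Algebra.adjoin R {x, z} = ⊤) :
    (Ideal.span {x * z - z * x}).IsTwoSided := by
  set I := Ideal.span {x * z - z * x}
  have hw (r : ℍ[R,a,b]) : (x * z - z * x) * r ∈ I := by
    induction (hxz ▸ Algebra.mem_top : r ∈ Algebra.adjoin R {x, z}) using
      Algebra.adjoin_induction with
    | mem y hy =>
      rcases hy with rfl | rfl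
      · exact Ideal.mem_span_singleton'.mpr ⟨_, (commutator_mul_left y z).symm⟩
      · exact Ideal.mem_span_singleton'.mpr ⟨_, (commutator_mul_right x y).symm⟩
    | algebraMap c => exact Ideal.mem_span_singleton'.mpr ⟨_, Algebra.commutes c _⟩
    | add y y' _ _ hy hy' => exact mul_add (x * z - z * x) y y' ▸ I.add_mem hy hy'
    | mul y y' _ _ hy hy' =>
      obtain ⟨d, hd⟩ := Ideal.mem_span_singleton'.mp hy
      rw [← mul_assoc, ← hd, mul_assoc]
      exact I.mul_mem_left d hy'
  refine ⟨fun r hs ↦ ?_⟩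
  obtain ⟨d, rfl⟩ := Ideal.mem_span_singleton'.mp hs
  rw [mul_assoc]
  exact I.mul_mem_left d (hw r)

lemma isUnit_commutatorFactor [IsDomain R] (hab : 4 * a * b ≠ 0) {x z : ℍ[R,a,b]}
    (hxz : Algebra.adjoin R {x, z} = ⊤) : IsUnit (commutatorFactor x z) := by
  let e := QuaternionAlgebra.Basis.self R (c₁ := a) (c₂ := 0) (c₃ := b)
  have := isTwoSided_span_commutator hxz
  obtain ⟨d, hd⟩ := Ideal.mem_span_singleton'.mp <|
    commutator_mem_of_adjoin_eq_top _ hxz (Ideal.mem_span_singleton_self (x * z - z * x)) e.i e.j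
  have hij : commutatorFactor e.i e.j = 1 := by simp [commutatorFactor, e]
  have hnorm : 4 * a * b * (reducedNorm d * commutatorFactor x z) = 4 * a * b * 1 := by
    rw [mul_left_comm, ← reducedNorm_commutator, ← reducedNorm_mul, hd, reducedNorm_commutator, hij]
  exact .of_mul_eq_one_right _ (mul_left_cancel₀ hab hnorm)

/-- The map of quaternion algebras induced by a homomorphism of the base rings. -/
@[simps]
def quaternionMap {S : Type*} [CommRing S] {a' b' : S} (f : R →+* S) (ha : f a = a')
    (hb : f b = b') : ℍ[R,a,b] →+* ℍ[S,a',b'] where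
  toFun x := ⟨f x.re, f x.imI, f x.imJ, f x.imK⟩
  map_zero' := by ext <;> simp
  map_one' := by ext <;> simp
  map_add' x z := by ext <;> simp
  map_mul' x z := by ext <;> simp [ha, hb]

section Map

variable {S : Type*} [CommRing S] {a' b' : S} (f : R →+* S) (ha : f a = a') (hb : f b = b')

lemma quaternionMap_star (x : ℍ[R,a,b]) :
    quaternionMap f ha hb (star x) = star (quaternionMap f ha hb x) := by
  ext <;> simp

lemma reducedNorm_quaternionMap (x : ℍ[R,a,b]) :
    reducedNorm (quaternionMap f ha hb x) = f (reducedNorm x) := by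
  simp [reducedNorm, ha, hb]

lemma commutatorFactor_quaternionMap (x z : ℍ[R,a,b]) :
    commutatorFactor (quaternionMap f ha hb x) (quaternionMap f ha hb z) =
      f (commutatorFactor x z) := by
  simp [commutatorFactor, ha, hb]

end Map

/-- The homogeneous elements for the grading of the quaternion algebra by `ℤ/2` in which `j` is
even and `i` is odd. -/
def homogeneousQuaternions (a b : R) : Submonoid ℍ[R,a,b] where
  carrier := {x | (x.imI = 0 ∧ x.imK = 0) ∨ (x.re = 0 ∧ x.imJ = 0)}
  one_mem' := by simp
  mul_mem' := by
    rintro x z (⟨h₁, h₂⟩ | ⟨h₁, h₂⟩) (⟨h₃, h₄⟩ | ⟨h₃, h₄⟩) <;> simp [h₁, h₂, h₃, h₄]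

lemma mem_homogeneousQuaternions {x : ℍ[R,a,b]} :
    x ∈ homogeneousQuaternions a b ↔ (x.imI = 0 ∧ x.imK = 0) ∨ (x.re = 0 ∧ x.imJ = 0) :=
  Iff.rfl

lemma star_mem_homogeneousQuaternions {x : ℍ[R,a,b]} (hx : x ∈ homogeneousQuaternions a b) :
    star x ∈ homogeneousQuaternions a b := by
  simpa [mem_homogeneousQuaternions] using hx

lemma exists_commutatorFactor_eq_sq_of_homogeneous {x z : ℍ[R,-1,b]}
    (hx : x ∈ homogeneousQuaternions (-1) b) (hz : z ∈ homogeneousQuaternions (-1) b)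
    (hx1 : reducedNorm x = 1) (hz1 : reducedNorm z = 1) (hxz : commutatorFactor x z ≠ 0) :
    ∃ α τ, commutatorFactor x z = α ^ 2 ∧ τ ^ 2 - b * α ^ 2 = 1 ∧ (x.re = 0 ∨ z.re = 0) := by
  simp only [commutatorFactor, reducedNorm] at hx1 hz1 hxz ⊢
  rw [mem_homogeneousQuaternions] at hx hz
  rcases hx with ⟨hxI, hxK⟩ | ⟨hxr, hxJ⟩ <;> rcases hz with ⟨hzI, hzK⟩ | ⟨hzr, hzJ⟩
  · exact absurd (by simp [hxI, hxK, hzI, hzK]) hxz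
  · refine ⟨x.imJ, x.re, ?_, ?_, .inr hzr⟩ <;> simp only [hxI, hxK, hzr, hzJ] at hx1 hz1 ⊢
    · linear_combination x.imJ ^ 2 * hz1
    · linear_combination hx1
  · refine ⟨z.imJ, z.re, ?_, ?_, .inl hxr⟩ <;> simp only [hxr, hxJ, hzI, hzK] at hx1 hz1 ⊢
    · linear_combination z.imJ ^ 2 * hx1
    · linear_combination hz1
  · refine ⟨x.imI * z.imK - x.imK * z.imI, x.imI * z.imI - b * x.imK * z.imK, ?_, ?_, .inl hxr⟩ <;>
      simp only [hxr, hxJ, hzr, hzJ] at hx1 hz1 ⊢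
    · ring
    · linear_combination (z.imI ^ 2 - b * z.imK ^ 2) * hx1 + hz1

lemma star_mem_subalgebra {S : Subalgebra R ℍ[R,a,b]} {x : ℍ[R,a,b]} (hx : x ∈ S) :
    star x ∈ S := by
  rw [QuaternionAlgebra.star_eq_two_re_sub]
  exact S.sub_mem (S.algebraMap_mem _) hx

lemma subalgebra_eq_top_of_i_mem_of_j_mem {S : Subalgebra R ℍ[R,a,b]}
    (hi : (QuaternionAlgebra.Basis.self R).i ∈ S) (hj : (QuaternionAlgebra.Basis.self R).j ∈ S) :
    S = ⊤ := by
  refine eq_top_iff.mpr fun x _ ↦ ?_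
  have hx : x = algebraMap R _ x.re + x.imI • (QuaternionAlgebra.Basis.self R).i +
      x.imJ • (QuaternionAlgebra.Basis.self R).j + x.imK •
        ((QuaternionAlgebra.Basis.self R).i * (QuaternionAlgebra.Basis.self R).j) := by
    ext <;> simp
  rw [hx]
  exact S.add_mem (S.add_mem (S.add_mem (S.algebraMap_mem _) (S.smul_mem hi _))
    (S.smul_mem hj _)) (S.smul_mem (S.mul_mem hi hj) _)

end Quaternion
section Groups

open Multiplicative (ofAdd)
open Monoid.Coprod (inl inr)

lemma ofAdd_one_pow_self (m : ℕ) : (ofAdd (1 : ZMod m)) ^ m = 1 := by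
  rw [← ofAdd_nsmul, nsmul_one, ZMod.natCast_self, ofAdd_zero]

lemma zpowers_ofAdd_one (m : ℕ) : Subgroup.zpowers (ofAdd (1 : ZMod m)) = ⊤ := by
  refine eq_top_iff.mpr fun x _ ↦ Subgroup.mem_zpowers_iff.mpr ?_
  obtain ⟨n, hn⟩ := ZMod.intCast_surjective x.toAdd
  exact ⟨n, by rw [← ofAdd_zsmul, zsmul_one, hn, ofAdd_toAdd]⟩

lemma exists_monoidHom_ofAdd_one {H : Type*} [Group H] {m : ℕ} {h : H} (hh : h ^ m = 1) :
    ∃ f : Cyc m →* H, f (ofAdd 1) = h := by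
  refine ⟨(ZMod.lift m ⟨zmultiplesHom _ (.ofMul h), ?_⟩).toMultiplicativeLeft, ?_⟩
  · simpa [← ofMul_pow] using hh
  · simpa using congrArg Additive.toMul
      (ZMod.lift_coe m (A := Additive H) ⟨zmultiplesHom _ (.ofMul h), by simp [← ofMul_pow, hh]⟩ 1)

variable {m n : ℕ}

lemma closure_inl_inr_eq_top :
    Subgroup.closure {(inl (ofAdd 1) : Monoid.Coprod (Cyc n) (Cyc m)), inr (ofAdd 1)} = ⊤ := by
  rw [Set.insert_eq, Subgroup.closure_union, ← Subgroup.zpowers_eq_closure,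
    ← Subgroup.zpowers_eq_closure, ← MonoidHom.map_zpowers, ← MonoidHom.map_zpowers,
    zpowers_ofAdd_one, zpowers_ofAdd_one, ← MonoidHom.range_eq_map, ← MonoidHom.range_eq_map,
    Monoid.Coprod.range_inl_sup_range_inr]

lemma exists_coprod_hom {H : Type*} [Group H] {h₁ h₂ : H} (h₁n : h₁ ^ n = 1) (h₂m : h₂ ^ m = 1) :
    ∃ f : Monoid.Coprod (Cyc n) (Cyc m) →* H, f (inl (ofAdd 1)) = h₁ ∧ f (inr (ofAdd 1)) = h₂ := by
  obtain ⟨f₁, hf₁⟩ := exists_monoidHom_ofAdd_one h₁n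
  obtain ⟨f₂, hf₂⟩ := exists_monoidHom_ofAdd_one h₂m
  exact ⟨Monoid.Coprod.lift f₁ f₂, by simpa using hf₁, by simpa using hf₂⟩

lemma exists_surjective_coprod_hom {H : Type*} [Group H] {h₁ h₂ : H}
    (hgen : Subgroup.closure {h₁, h₂} = ⊤) (h₁n : h₁ ^ n = 1) (h₂m : h₂ ^ m = 1) :
    ∃ f : Monoid.Coprod (Cyc n) (Cyc m) →* H, Function.Surjective f := by
  obtain ⟨f, hf₁, hf₂⟩ := exists_coprod_hom h₁n h₂m
  refine ⟨f, MonoidHom.range_eq_top.mp (eq_top_iff.mpr ?_)⟩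
  rw [← hgen, Subgroup.closure_le]
  rintro _ (rfl | rfl)
  exacts [⟨_, hf₁⟩, ⟨_, hf₂⟩]

lemma commute_map_of_closure_pair_eq_top {G H : Type*} [Group G] [Group H] {s t : G}
    (hst : Subgroup.closure {s, t} = ⊤) {f : G →* H} (h : Commute (f s) (f t)) (x y : G) :
    Commute (f x) (f y) := by
  have hcomm : IsMulCommutative (Subgroup.closure {f s, f t}) := by
    refine Subgroup.isMulCommutative_closure ?_
    rintro _ (rfl | rfl) _ (rfl | rfl)
    exacts [rfl, h, h.symm, rfl]
  have hmem (z : G) : f z ∈ Subgroup.closure {f s, f t} := by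
    rw [← Set.image_pair, ← MonoidHom.map_closure, hst]
    exact ⟨z, trivial, rfl⟩
  exact congrArg Subtype.val (hcomm.is_comm.comm ⟨f x, hmem x⟩ ⟨f y, hmem y⟩)

lemma comap_range_eq_sup_closure_pair {G U : Type*} [Group G] [Group U] {N : Subgroup U} [N.Normal]
    {φ : G →* U ⧸ N} {s t : G} (hst : Subgroup.closure {s, t} = ⊤) {x y : U} (hx : φ s = x)
    (hy : φ t = y) : φ.range.comap (QuotientGroup.mk' N) = N ⊔ Subgroup.closure {x, y} := by
  rw [← QuotientGroup.comap_map_mk', MonoidHom.map_closure, Set.image_pair,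
    MonoidHom.range_eq_map, ← hst, MonoidHom.map_closure, Set.image_pair, hx, hy]
  rfl

end Groups

section Unitary

variable {A : Type*} [Ring A] [StarRing A]

instance normal_zpowers_neg_one : (Subgroup.zpowers (-1 : unitary A)).Normal := by
  refine ⟨fun u hu g ↦ ?_⟩
  obtain ⟨k, rfl⟩ := Subgroup.mem_zpowers_iff.mp hu
  rw [((Commute.neg_one_right g).zpow_right k).eq, mul_inv_cancel_right]
  exact hu

/-- The group of unitary elements of a submonoid closed under `star`. -/
def starClosedUnitary (M : Submonoid A) (hM : ∀ x ∈ M, star x ∈ M) : Subgroup (unitary A) where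
  __ := M.comap (unitary A).subtype
  inv_mem' {u} hu := hM u hu

lemma zpowers_neg_one_sup_closure_pair_le {M : Submonoid A} (hM : ∀ x ∈ M, star x ∈ M)
    (hneg : -1 ∈ M) {u v : unitary A} (hu : (u : A) ∈ M) (hv : (v : A) ∈ M) :
    Subgroup.zpowers (-1) ⊔ Subgroup.closure {u, v} ≤ starClosedUnitary M hM := by
  refine sup_le (Subgroup.zpowers_le.mpr hneg) ((Subgroup.closure_le _).mpr ?_)
  rintro _ (rfl | rfl)
  exacts [hu, hv]

end Unitary

section SpecialLinear

variable {F : Type*} [Field F]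

lemma eq_or_eq_neg_of_coe_eq {M N : SL(2, F)} (h : (M : PSL(2, F)) = N) : N = M ∨ N = -M := by
  rw [QuotientGroup.eq, Matrix.SpecialLinearGroup.mem_center_iff] at h
  obtain ⟨r, hr, hM⟩ := h
  rw [Fintype.card_fin, sq_eq_one_iff] at hr
  refine hr.imp ?_ ?_ <;> rintro rfl
  · have h1 : M⁻¹ * N = 1 := Subtype.ext (by rw [← hM, map_one]; rfl)
    exact (inv_mul_eq_one.mp h1).symm
  · have h1 : M⁻¹ * N = -1 := Subtype.ext (by rw [← hM, map_neg, map_one]; rfl)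
    rw [inv_mul_eq_iff_eq_mul.mp h1, mul_neg_one]

lemma trace_eq_zero_of_coe_eq {M N : SL(2, F)} (h : (M : PSL(2, F)) = N)
    (hM : (M : Matrix (Fin 2) (Fin 2) F).trace = 0) :
    (N : Matrix (Fin 2) (Fin 2) F).trace = 0 := by
  rcases eq_or_eq_neg_of_coe_eq h with rfl | rfl
  · exact hM
  · rw [coe_neg, trace_neg, hM, neg_zero]

lemma det_mul_sub_mul_eq_of_coe_eq {M M' N N' : SL(2, F)} (hM : (M : PSL(2, F)) = M')
    (hN : (N : PSL(2, F)) = N') :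
    (M * N - N * M : Matrix (Fin 2) (Fin 2) F).det =
      (M' * N' - N' * M' : Matrix (Fin 2) (Fin 2) F).det := by
  have hneg (K : Matrix (Fin 2) (Fin 2) F) : (-K).det = K.det := by simp [det_neg]
  rcases eq_or_eq_neg_of_coe_eq hM with rfl | rfl <;>
    rcases eq_or_eq_neg_of_coe_eq hN with rfl | rfl <;>
    simp only [coe_neg, neg_mul, mul_neg, neg_neg, neg_sub_neg]
  all_goals rw [← hneg, neg_sub]

lemma charpoly_dvd_of_aeval_eq_zero {A : Matrix (Fin 2) (Fin 2) F}
    (hA : A ∉ (algebraMap F (Matrix (Fin 2) (Fin 2) F)).range) {p : F[X]}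
    (hp : Polynomial.aeval A p = 0) : A.charpoly ∣ p := by
  have hint : IsIntegral F A := Algebra.IsIntegral.isIntegral A
  have hmin : A.charpoly = minpoly F A :=
    Polynomial.eq_of_monic_of_dvd_of_natDegree_le (minpoly.monic hint) A.charpoly_monic
      A.minpoly_dvd_charpoly
      (by simpa using (minpoly.two_le_natDegree_iff hint).mpr hA)
  rw [hmin]
  exact minpoly.dvd F A hp

lemma coe_notMem_range_algebraMap {M : SL(2, F)} (hM : M ∉ Subgroup.center SL(2, F)) :
    (M : Matrix (Fin 2) (Fin 2) F) ∉ (algebraMap F (Matrix (Fin 2) (Fin 2) F)).range := by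
  rintro ⟨r, hr⟩
  refine hM (Matrix.SpecialLinearGroup.mem_center_iff.mpr ⟨r, ?_, hr⟩)
  have hdet := congrArg Matrix.det hr
  simpa [algebraMap_eq_diagonal] using hdet

lemma charpoly_dvd_of_coe_pow_eq_one {M : SL(2, F)} (hM : M ∉ Subgroup.center SL(2, F)) {m : ℕ}
    (hm : (M : PSL(2, F)) ^ m = 1) :
    (M : Matrix (Fin 2) (Fin 2) F).charpoly ∣ X ^ m - 1 ∨
      (M : Matrix (Fin 2) (Fin 2) F).charpoly ∣ X ^ m + 1 := by
  refine (eq_or_eq_neg_of_coe_eq (M := 1) (N := M ^ m) (by simpa using hm.symm)).imp ?_ ?_ <;>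
    intro h <;>
    refine charpoly_dvd_of_aeval_eq_zero (coe_notMem_range_algebraMap hM) ?_ <;>
    simp [← Matrix.SpecialLinearGroup.coe_pow, h]

lemma trace_eq_zero_of_coe_sq_eq_one {M : SL(2, F)} (hM : M ∉ Subgroup.center SL(2, F))
    (h : (M : PSL(2, F)) ^ 2 = 1) : (M : Matrix (Fin 2) (Fin 2) F).trace = 0 := by
  have htrace {p : F[X]} (hp : p.Monic) (hdeg : p.natDegree = 2) (hp1 : p.coeff 1 = 0)
      (hdvd : (M : Matrix (Fin 2) (Fin 2) F).charpoly ∣ p) :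
      (M : Matrix (Fin 2) (Fin 2) F).trace = 0 := by
    have heq := Polynomial.eq_of_monic_of_dvd_of_natDegree_le (charpoly_monic _) hp hdvd
      (by simp [hdeg])
    rw [heq, charpoly_fin_two] at hp1
    simpa [Polynomial.coeff_one] using hp1
  rcases charpoly_dvd_of_coe_pow_eq_one hM h with hdvd | hdvd
  · exact htrace (Polynomial.monic_X_pow_sub_C 1 two_ne_zero) (Polynomial.natDegree_X_pow_sub_C)
      (by simp [Polynomial.coeff_one]) hdvd
  · exact htrace (Polynomial.monic_X_pow_add_C 1 two_ne_zero) (Polynomial.natDegree_X_pow_add_C)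
      (by simp [Polynomial.coeff_one]) hdvd

lemma not_commute_coe (h2 : (2 : F) ≠ 0) {M N : SL(2, F)}
    (hM : (M : Matrix (Fin 2) (Fin 2) F).trace ≠ 0)
    (hMN : (M * N - N * M : Matrix (Fin 2) (Fin 2) F).det ≠ 0) :
    ¬ Commute (M : PSL(2, F)) (N : PSL(2, F)) := by
  intro hcomm
  rcases eq_or_eq_neg_of_coe_eq (M := N * M) (N := M * N) hcomm.eq.symm with h | h
  · exact hMN (by rw [← coe_mul, h, coe_mul, sub_self, det_zero])
  · refine hM ?_
    have hconj : -M = N * M * N⁻¹ := by rw [eq_mul_inv_iff_mul_eq, neg_mul, h, neg_neg]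
    have htrace := congrArg (fun K : SL(2, F) ↦ (K : Matrix (Fin 2) (Fin 2) F).trace) hconj
    simp only [coe_neg, coe_mul, trace_neg] at htrace
    rw [trace_mul_comm, ← mul_assoc, ← coe_mul, inv_mul_cancel, Matrix.SpecialLinearGroup.coe_one,
      one_mul] at htrace
    have h2M : 2 * (M : Matrix (Fin 2) (Fin 2) F).trace = 0 := by linear_combination -htrace
    exact (mul_eq_zero.mp h2M).resolve_left h2

end SpecialLinear

section MatrixRepresentation

variable {R : Type*} [CommRing R]

lemma adjugate_eq_trace_smul_one_sub (M : Matrix (Fin 2) (Fin 2) R) :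
    M.adjugate = M.trace • 1 - M := by
  rw [adjugate_fin_two, trace_fin_two]
  ext i j
  fin_cases i <;> fin_cases j <;> simp

section Basis

variable {a b : R} (e : QuaternionAlgebra.Basis (Matrix (Fin 2) (Fin 2) R) a 0 b)
  (hi : e.i.trace = 0) (hj : e.j.trace = 0) (hk : e.k.trace = 0)
include hi hj hk

lemma trace_lift (x : ℍ[R,a,b]) : (e.lift x).trace = 2 * x.re := by
  simp [QuaternionAlgebra.Basis.lift, algebraMap_eq_diagonal, trace_smul, hi, hj, hk]

lemma det_lift (x : ℍ[R,a,b]) : (e.lift x).det = reducedNorm x := by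
  have hstar : (e.lift x).adjugate = e.liftHom (star x) := by
    rw [adjugate_eq_trace_smul_one_sub, trace_lift e hi hj hk, QuaternionAlgebra.star_eq_two_re_sub,
      zero_mul, add_zero, map_sub, ← QuaternionAlgebra.coe_algebraMap, AlgHom.commutes,
      Algebra.algebraMap_eq_smul_one]
    rfl
  have hmul : (e.lift x).det • 1 = reducedNorm x • (1 : Matrix (Fin 2) (Fin 2) R) := by
    rw [← mul_adjugate, hstar, ← Algebra.algebraMap_eq_smul_one, ← AlgHom.commutes e.liftHom,
      ← self_mul_star_eq_reducedNorm, map_mul]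
    rfl
  simpa using congrFun (congrFun hmul 0) 0

end Basis

section Pair

variable {A B : Matrix (Fin 2) (Fin 2) R} {η σ : R}

lemma anticommutator_eq (hA : A.trace = 0) (hB : B.trace = 2 * η) (hAB : (A * B).trace = 2 * σ) :
    B * A = (2 * η) • A + (2 * σ) • 1 - A * B := by
  rw [← hB, ← hAB]
  rw [trace_fin_two, ← eq_neg_iff_add_eq_zero] at hA
  ext i j
  fin_cases i <;> fin_cases j <;> simp [mul_apply, trace_fin_two, hA] <;> ring

lemma mul_self_eq_trace_smul_sub_det_smul_one (M : Matrix (Fin 2) (Fin 2) R) :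
    M * M = M.trace • M - M.det • 1 := by
  rw [← mul_adjugate, adjugate_eq_trace_smul_one_sub, mul_sub, mul_smul_comm, mul_one,
    sub_sub_cancel]

/-- The quaternion basis of the algebra generated by two matrices `A` and `B` of determinant `1`
with `tr A = 0`, `tr B = 2η` and `tr AB = 2σ`. -/
@[simps]
def pairBasis (hA : A.trace = 0) (hA1 : A.det = 1) (hB : B.trace = 2 * η) (hB1 : B.det = 1)
    (hAB : (A * B).trace = 2 * σ) :
    QuaternionAlgebra.Basis (Matrix (Fin 2) (Fin 2) R) (-1) 0 (σ ^ 2 + (η ^ 2 - 1)) where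
  i := A
  j := B - η • 1 + σ • A
  k := A * (B - η • 1 + σ • A)
  i_mul_i := by simp [mul_self_eq_trace_smul_sub_det_smul_one A, hA, hA1]
  j_mul_j := by
    have h1 : A * A = -1 := by simp [mul_self_eq_trace_smul_sub_det_smul_one A, hA, hA1]
    have h2 : B * B = (2 * η) • B - 1 := by
      simp [mul_self_eq_trace_smul_sub_det_smul_one B, hB, hB1]
    have h3 := anticommutator_eq hA hB hAB
    simp only [mul_add, add_mul, mul_sub, sub_mul, smul_mul_assoc, mul_smul_comm, one_mul, mul_one,
      h1, h2, h3]
    module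
  i_mul_j := rfl
  j_mul_i := by
    have h1 : A * A = -1 := by simp [mul_self_eq_trace_smul_sub_det_smul_one A, hA, hA1]
    simp only [mul_add, add_mul, mul_sub, sub_mul, smul_mul_assoc, mul_smul_comm, one_mul, mul_one,
      h1, anticommutator_eq hA hB hAB]
    module

end Pair

end MatrixRepresentation

section GenericAlgebra

variable {R : Type*} [CommRing R]

/-- The generic quaternion algebra generated by an element `i` with `i² = -1` and an element of
trace `2η` and norm `1`. The variable `X` stands for half the trace of the product of these two
generators. -/
abbrev GenericAlgebra (η : R) : Type _ := ℍ[R[X],-1,X ^ 2 + C (η ^ 2 - 1)]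

/-- The element of trace `2η` and norm `1` which generates `GenericAlgebra η` together with `i`. -/
noncomputable def partner (η : R) : GenericAlgebra η := ⟨C η, -X, 1, 0⟩

lemma j_eq_partner_add (η : R) :
    (QuaternionAlgebra.Basis.self R[X]).j =
      partner η - algebraMap R[X] _ (C η) + (X : R[X]) • (QuaternionAlgebra.Basis.self R[X]).i := by
  ext <;> simp [partner]

/-- Evaluation of the generic quaternion algebra at `X = s`. -/
noncomputable def specialize (η s : R) : GenericAlgebra η →+* ℍ[R,-1,s ^ 2 + (η ^ 2 - 1)] :=
  quaternionMap (Polynomial.evalRingHom s) (by simp) (by simp)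

/-- The representation of the generic quaternion algebra on `R²` given by a pair of matrices of
determinant `1` with `tr A = 0`, `tr B = 2η` and `tr AB = 2σ`. -/
noncomputable def pairRepresentation {A B : Matrix (Fin 2) (Fin 2) R} {η σ : R} (hA : A.trace = 0)
    (hA1 : A.det = 1) (hB : B.trace = 2 * η) (hB1 : B.det = 1) (hAB : (A * B).trace = 2 * σ) :
    GenericAlgebra η →+* Matrix (Fin 2) (Fin 2) R :=
  (pairBasis hA hA1 hB hB1 hAB).liftHom.toRingHom.comp (specialize η σ)

section
variable {A B : Matrix (Fin 2) (Fin 2) R} {η σ : R} (hA : A.trace = 0)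
    (hA1 : A.det = 1) (hB : B.trace = 2 * η) (hB1 : B.det = 1) (hAB : (A * B).trace = 2 * σ)

lemma pairRepresentation_i :
    pairRepresentation hA hA1 hB hB1 hAB (QuaternionAlgebra.Basis.self R[X]).i = A := by
  simp [pairRepresentation, specialize, QuaternionAlgebra.Basis.lift]

lemma pairRepresentation_partner :
    pairRepresentation hA hA1 hB hB1 hAB (partner η) = B := by
  have hlift : pairRepresentation hA hA1 hB hB1 hAB (partner η) =
      η • 1 + -σ • A + (B - η • 1 + σ • A) := by
    simp [pairRepresentation, specialize, partner, QuaternionAlgebra.Basis.lift,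
      Algebra.algebraMap_eq_smul_one]
  rw [hlift]
  module

lemma trace_pairBasis_j : (pairBasis hA hA1 hB hB1 hAB).j.trace = 0 := by
  rw [j_pairBasis, trace_add, trace_sub, trace_smul, trace_smul, trace_one, hA, hB,
    Fintype.card_fin]
  simp only [smul_eq_mul, Nat.cast_ofNat]
  ring

lemma trace_pairBasis_k : (pairBasis hA hA1 hB hB1 hAB).k.trace = 0 := by
  have hAA : A * A = -1 := by simp [mul_self_eq_trace_smul_sub_det_smul_one A, hA, hA1]
  simp only [k_pairBasis, mul_add, mul_sub, mul_smul_comm, mul_one, hAA, trace_add, trace_sub,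
    trace_smul, trace_neg, trace_one, hA, hAB, Fintype.card_fin, Nat.cast_ofNat, smul_eq_mul]
  ring

lemma trace_pairRepresentation (x : GenericAlgebra η) :
    (pairRepresentation hA hA1 hB hB1 hAB x).trace = 2 * x.re.eval σ :=
  trace_lift _ hA (trace_pairBasis_j ..) (trace_pairBasis_k ..) _

lemma det_pairRepresentation (x : GenericAlgebra η) :
    (pairRepresentation hA hA1 hB hB1 hAB x).det = (reducedNorm x).eval σ :=
  (det_lift _ hA (trace_pairBasis_j ..) (trace_pairBasis_k ..) _).trans
    (reducedNorm_quaternionMap ..)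

end
end GenericAlgebra

section GenericUnitary

open QuaternionAlgebra.Basis (self)

section
variable {R : Type*} [CommRing R] (η : R)

lemma i_mem_unitary : (self R[X]).i ∈ unitary (GenericAlgebra η) := by
  simp [mem_unitary_iff_reducedNorm_eq_one, reducedNorm]

lemma partner_mem_unitary : partner η ∈ unitary (GenericAlgebra η) := by
  simp [mem_unitary_iff_reducedNorm_eq_one, reducedNorm, partner]
  ring

/-- The signs `±1` among the unitary elements of the generic quaternion algebra. -/
noncomputable abbrev signs : Subgroup (unitary (GenericAlgebra η)) := Subgroup.zpowers (-1)

variable {η}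

lemma adjoin_eq_top_of_mem {x z : unitary (GenericAlgebra η)}
    (hi : ⟨_, i_mem_unitary η⟩ ∈ signs η ⊔ Subgroup.closure {x, z})
    (hp : ⟨_, partner_mem_unitary η⟩ ∈ signs η ⊔ Subgroup.closure {x, z}) :
    Algebra.adjoin R[X] {(x : GenericAlgebra η), (z : GenericAlgebra η)} = ⊤ := by
  set S := Algebra.adjoin R[X] {(x : GenericAlgebra η), (z : GenericAlgebra η)}
  have hle : signs η ⊔ Subgroup.closure {x, z} ≤
      starClosedUnitary S.toSubmonoid fun _ ↦ star_mem_subalgebra :=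
    zpowers_neg_one_sup_closure_pair_le _ (S.neg_mem S.one_mem)
      (Algebra.subset_adjoin (by simp)) (Algebra.subset_adjoin (by simp))
  have hiS : (self R[X]).i ∈ S := hle hi
  have hpS : partner η ∈ S := hle hp
  refine subalgebra_eq_top_of_i_mem_of_j_mem hiS ?_
  rw [j_eq_partner_add]
  exact S.add_mem (S.sub_mem hpS (S.algebraMap_mem _)) (S.smul_mem hiS _)

lemma specialize_zero_mem_homogeneousQuaternions {x : unitary (GenericAlgebra η)}
    (hx : x ∈ signs η ⊔
      Subgroup.closure {⟨_, i_mem_unitary η⟩, ⟨_, partner_mem_unitary η⟩}) :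
    specialize η 0 x ∈ homogeneousQuaternions (-1) (0 ^ 2 + (η ^ 2 - 1)) := by
  refine zpowers_neg_one_sup_closure_pair_le
    (M := (homogeneousQuaternions (-1) (0 ^ 2 + (η ^ 2 - 1))).comap (specialize η 0))
    (fun y hy ↦ ?_) ?_ ?_ ?_ hx
  · rw [Submonoid.mem_comap] at hy ⊢
    rw [specialize, quaternionMap_star]
    exact star_mem_homogeneousQuaternions hy
  all_goals simp [mem_homogeneousQuaternions, specialize, partner]

section Representation

variable {A B : SL(2, R)} {σ : R} (hA : (A : Matrix (Fin 2) (Fin 2) R).trace = 0)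
  (hB : (B : Matrix (Fin 2) (Fin 2) R).trace = 2 * η)
  (hAB : (A * B : Matrix (Fin 2) (Fin 2) R).trace = 2 * σ)

/-- The restriction of `pairRepresentation` to unitary elements. -/
noncomputable def unitaryPairRepresentation : unitary (GenericAlgebra η) →* SL(2, R) where
  toFun x := ⟨pairRepresentation hA A.det_coe hB B.det_coe hAB x, by
    rw [det_pairRepresentation, mem_unitary_iff_reducedNorm_eq_one.mp x.2, Polynomial.eval_one]⟩
  map_one' := Subtype.ext (map_one _)
  map_mul' x z := Subtype.ext (map_mul _ _ _)

lemma unitaryPairRepresentation_i :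
    unitaryPairRepresentation hA hB hAB ⟨_, i_mem_unitary η⟩ = A :=
  Subtype.ext (pairRepresentation_i ..)

lemma unitaryPairRepresentation_partner :
    unitaryPairRepresentation hA hB hAB ⟨_, partner_mem_unitary η⟩ = B :=
  Subtype.ext (pairRepresentation_partner ..)

lemma trace_unitaryPairRepresentation (x : unitary (GenericAlgebra η)) :
    (unitaryPairRepresentation hA hB hAB x : Matrix (Fin 2) (Fin 2) R).trace =
      2 * (x : GenericAlgebra η).re.eval σ :=
  trace_pairRepresentation ..

lemma det_commutator_unitaryPairRepresentation (x z : unitary (GenericAlgebra η)) :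
    (unitaryPairRepresentation hA hB hAB x * unitaryPairRepresentation hA hB hAB z -
      unitaryPairRepresentation hA hB hAB z * unitaryPairRepresentation hA hB hAB x :
        Matrix (Fin 2) (Fin 2) R).det =
      (reducedNorm (x * z - z * x : GenericAlgebra η)).eval σ := by
  rw [← det_pairRepresentation hA A.det_coe hB B.det_coe hAB,
    map_sub (pairRepresentation hA A.det_coe hB B.det_coe hAB),
    map_mul (pairRepresentation hA A.det_coe hB B.det_coe hAB),
    map_mul (pairRepresentation hA A.det_coe hB B.det_coe hAB)]
  rfl

lemma signs_le_comap_center :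
    signs η ≤ (Subgroup.center SL(2, R)).comap (unitaryPairRepresentation hA hB hAB) := by
  rw [Subgroup.zpowers_le, Subgroup.mem_comap]
  convert (neg_one_mem_center : -1 ∈ Subgroup.center SL(2, R))
  refine Subtype.ext ?_
  change pairRepresentation hA A.det_coe hB B.det_coe hAB (-1) = _
  rw [map_neg, map_one, coe_neg, Matrix.SpecialLinearGroup.coe_one]

end Representation
end

variable {F : Type*} [Field F] {η σ : F}

lemma exists_commutatorFactor_eq_C (hF : ¬ IsSquare (-1 : F)) {x z : GenericAlgebra η}
    (hxz : Algebra.adjoin F[X] {x, z} = ⊤) : ∃ c ≠ 0, commutatorFactor x z = C c := by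
  have hdisc : 4 * (-1) * (X ^ 2 + C (η ^ 2 - 1)) ≠ (0 : F[X]) := by
    refine mul_ne_zero ?_ (Polynomial.X_pow_add_C_ne_zero two_pos _)
    rw [mul_neg_one, ← map_ofNat C]
    exact neg_ne_zero.mpr (Polynomial.C_ne_zero.mpr (four_ne_zero_of_not_isSquare_neg_one hF))
  obtain ⟨c, hc, hfactor⟩ := Polynomial.isUnit_iff.mp (isUnit_commutatorFactor hdisc hxz)
  exact ⟨c, hc.ne_zero, hfactor.symm⟩

lemma eval_re_eq_zero_or_eval_re_eq_zero (hF : ¬ IsSquare (-1 : F)) {x z : GenericAlgebra η}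
    (hx : x ∈ unitary (GenericAlgebra η)) (hz : z ∈ unitary (GenericAlgebra η))
    (hxz : Algebra.adjoin F[X] {x, z} = ⊤)
    (hx0 : specialize η 0 x ∈ homogeneousQuaternions (-1) (0 ^ 2 + (η ^ 2 - 1)))
    (hz0 : specialize η 0 z ∈ homogeneousQuaternions (-1) (0 ^ 2 + (η ^ 2 - 1)))
    (hdet : (reducedNorm (x * z - z * x)).eval σ = 4) :
    x.re.eval σ = 0 ∨ z.re.eval σ = 0 := by
  obtain ⟨c, hc, hfactor⟩ := exists_commutatorFactor_eq_C hF hxz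
  have hnorm : (σ ^ 2 + (η ^ 2 - 1)) * c = -1 := by
    rw [reducedNorm_commutator, hfactor] at hdet
    simp only [mul_neg, mul_one, map_sub, map_pow, map_one, neg_mul, Polynomial.eval_neg,
      Polynomial.eval_mul, Polynomial.eval_ofNat, Polynomial.eval_add, Polynomial.eval_pow,
      Polynomial.eval_X, Polynomial.eval_sub, Polynomial.eval_C, Polynomial.eval_one] at hdet
    refine mul_left_cancel₀ (four_ne_zero_of_not_isSquare_neg_one hF) ?_
    linear_combination -hdet
  have hfactor0 : commutatorFactor (specialize η 0 x) (specialize η 0 z) = c :=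
    (commutatorFactor_quaternionMap ..).trans (by simp [hfactor])
  have hnorm0 {y} (hy : y ∈ unitary (GenericAlgebra η)) : reducedNorm (specialize η 0 y) = 1 :=
    (reducedNorm_quaternionMap ..).trans
      (by rw [mem_unitary_iff_reducedNorm_eq_one.mp hy, map_one])
  obtain ⟨α, τ, hα, hτ, hre⟩ := exists_commutatorFactor_eq_sq_of_homogeneous hx0 hz0
    (hnorm0 hx) (hnorm0 hz) (hfactor0 ▸ hc)
  rw [hfactor0] at hα
  have hσα : σ * α = 0 :=
    eq_zero_of_sq_add_sq_eq_zero hF (x := τ)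
      (by linear_combination hτ + hnorm - (σ ^ 2 + η ^ 2 - 1) * hα)
  have hα0 : α ≠ 0 := by
    rintro rfl
    exact hc (by simpa using hα)
  rw [(mul_eq_zero.mp hσα).resolve_right hα0]
  exact hre

end GenericUnitary

section NoLift

open Multiplicative (ofAdd)
open Monoid.Coprod (inl inr)

lemma pow_eq_one_or_eq_neg_one {R A : Type*} [CommRing R] [Ring A] [Algebra R A] {p : R[X]} {m : ℕ}
    (hp : p ∣ X ^ m - 1 ∨ p ∣ X ^ m + 1) {x : A} (hx : Polynomial.aeval x p = 0) :
    x ^ m = 1 ∨ x ^ m = -1 := by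
  refine hp.imp ?_ ?_ <;> intro hdvd <;>
    have h := Polynomial.aeval_eq_zero_of_dvd_aeval_eq_zero hdvd hx
  · simpa [sub_eq_zero] using h
  · simpa [← eq_neg_iff_add_eq_zero] using h

section
variable {R : Type*} [CommRing R] {η : R}

lemma coe_pow_eq_one {x : unitary (GenericAlgebra η)} {m : ℕ}
    (h : (x : GenericAlgebra η) ^ m = 1 ∨ (x : GenericAlgebra η) ^ m = -1) :
    (x : unitary (GenericAlgebra η) ⧸ signs η) ^ m = 1 := by
  rw [← QuotientGroup.mk_pow, QuotientGroup.eq_one_iff]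
  rcases h with h | h
  · rw [(Subtype.ext h : x ^ m = 1)]
    exact one_mem _
  · rw [(Subtype.ext h : x ^ m = -1)]
    exact Subgroup.mem_zpowers _

lemma aeval_partner_eq_zero :
    Polynomial.aeval (partner η) (X ^ 2 - C (2 * η) * X + 1 : R[X]) = 0 := by
  have h : partner η * partner η = (2 * η) • partner η - 1 := by
    refine QuaternionAlgebra.ext ?_ ?_ ?_ ?_ <;>
      simp [partner, two_mul, Polynomial.smul_eq_C_mul] <;> ring
  rw [map_add, map_sub (Polynomial.aeval (R := R) (partner η)), map_pow, map_one,
    map_mul, Polynomial.aeval_C, Polynomial.aeval_X, ← Algebra.smul_def,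
    sq (partner η), h]
  abel

lemma exists_coprod_hom_generic {m : ℕ}
    (hm : (X ^ 2 - C (2 * η) * X + 1 : R[X]) ∣ X ^ m - 1 ∨
      (X ^ 2 - C (2 * η) * X + 1 : R[X]) ∣ X ^ m + 1) :
    ∃ φ : Monoid.Coprod (Cyc 2) (Cyc m) →* unitary (GenericAlgebra η) ⧸ signs η,
      φ (inl (ofAdd 1)) = (⟨_, i_mem_unitary η⟩ : unitary _) ∧
        φ (inr (ofAdd 1)) = (⟨_, partner_mem_unitary η⟩ : unitary _) :=
  exists_coprod_hom (coe_pow_eq_one (.inr (by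
    rw [sq, QuaternionAlgebra.Basis.i_mul_i, neg_one_smul, zero_smul, add_zero])))
    (coe_pow_eq_one (pow_eq_one_or_eq_neg_one hm aeval_partner_eq_zero))

end

section Factorization

variable {F : Type*} [Field F] {η σ : F} {m : ℕ} {A B : SL(2, F)}
  (hA : (A : Matrix (Fin 2) (Fin 2) F).trace = 0)
  (hB : (B : Matrix (Fin 2) (Fin 2) F).trace = 2 * η)
  (hAB : (A * B : Matrix (Fin 2) (Fin 2) F).trace = 2 * σ)
  {φ : Monoid.Coprod (Cyc 2) (Cyc m) →* unitary (GenericAlgebra η) ⧸ signs η}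
  (hφi : φ (inl (ofAdd 1)) = (⟨_, i_mem_unitary η⟩ : unitary _))
  (hφp : φ (inr (ofAdd 1)) = (⟨_, partner_mem_unitary η⟩ : unitary _))

include hφi hφp in
lemma coe_unitaryPairRepresentation_eq {θ : Monoid.Coprod (Cyc 2) (Cyc m) →* PSL(2, F)}
    (hθA : θ (inl (ofAdd 1)) = A) (hθB : θ (inr (ofAdd 1)) = B)
    {g : Monoid.Coprod (Cyc 2) (Cyc m)} {x : unitary (GenericAlgebra η)} (hx : φ g = x) :
    (unitaryPairRepresentation hA hB hAB x : PSL(2, F)) = θ g := by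
  set ψ := QuotientGroup.map _ _ (unitaryPairRepresentation hA hB hAB)
    (signs_le_comap_center hA hB hAB)
  have hψφ : ψ.comp φ = θ := by
    refine MonoidHom.eq_of_eqOn_dense closure_inl_inr_eq_top ?_
    rintro _ (rfl | rfl)
    · rw [MonoidHom.comp_apply, hφi, hθA, QuotientGroup.map_mk, unitaryPairRepresentation_i]
    · rw [MonoidHom.comp_apply, hφp, hθB, QuotientGroup.map_mk, unitaryPairRepresentation_partner]
  rw [← hψφ, MonoidHom.comp_apply, hx, QuotientGroup.map_mk]

include hφi hφp in
lemma eval_re_eq_zero_or_eval_re_eq_zero_of_closure_eq_top (hF : ¬ IsSquare (-1 : F))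
    {g₁ g₂ : Monoid.Coprod (Cyc 2) (Cyc m)} (hg : Subgroup.closure {g₁, g₂} = ⊤)
    {x z : unitary (GenericAlgebra η)} (hx : φ g₁ = x) (hz : φ g₂ = z)
    (hdet : (reducedNorm (x * z - z * x : GenericAlgebra η)).eval σ = 4) :
    (x : GenericAlgebra η).re.eval σ = 0 ∨ (z : GenericAlgebra η).re.eval σ = 0 := by
  have hgen := comap_range_eq_sup_closure_pair closure_inl_inr_eq_top hφi hφp
  have hgen' := comap_range_eq_sup_closure_pair hg hx hz
  exact eval_re_eq_zero_or_eval_re_eq_zero hF x.2 z.2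
    (adjoin_eq_top_of_mem (hgen' ▸ ⟨_, hφi⟩) (hgen' ▸ ⟨_, hφp⟩))
    (specialize_zero_mem_homogeneousQuaternions (hgen ▸ ⟨_, hx⟩))
    (specialize_zero_mem_homogeneousQuaternions (hgen ▸ ⟨_, hz⟩)) hdet

end Factorization

section

variable {F : Type*} [Field F] {m : ℕ} {θ : Monoid.Coprod (Cyc 2) (Cyc m) →* PSL(2, F)}
  {g₁ g₂ : Monoid.Coprod (Cyc 2) (Cyc m)}

lemma exists_lift_generators (hcomm : ¬ Commute (θ g₁) (θ g₂)) :
    ∃ A B : SL(2, F), θ (inl (ofAdd 1)) = A ∧ θ (inr (ofAdd 1)) = B ∧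
      (A : Matrix (Fin 2) (Fin 2) F).trace = 0 ∧
      ((B : Matrix (Fin 2) (Fin 2) F).charpoly ∣ X ^ m - 1 ∨
        (B : Matrix (Fin 2) (Fin 2) F).charpoly ∣ X ^ m + 1) := by
  obtain ⟨A, hA⟩ := QuotientGroup.mk_surjective (θ (inl (ofAdd 1)))
  obtain ⟨B, hB⟩ := QuotientGroup.mk_surjective (θ (inr (ofAdd 1)))
  have hAB : ¬ Commute (A : PSL(2, F)) B := fun h ↦
    hcomm (commute_map_of_closure_pair_eq_top closure_inl_inr_eq_top (hA ▸ hB ▸ h) g₁ g₂)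
  have hA1 : A ∉ Subgroup.center SL(2, F) := fun h ↦
    hAB ((QuotientGroup.eq_one_iff A).mpr h ▸ Commute.one_left _)
  have hB1 : B ∉ Subgroup.center SL(2, F) := fun h ↦
    hAB ((QuotientGroup.eq_one_iff B).mpr h ▸ Commute.one_right _)
  refine ⟨A, B, hA.symm, hB.symm, trace_eq_zero_of_coe_sq_eq_one hA1 ?_,
    charpoly_dvd_of_coe_pow_eq_one hB1 ?_⟩
  · rw [hA, ← map_pow, ← map_pow, ofAdd_one_pow_self, map_one, map_one]
  · rw [hB, ← map_pow, ← map_pow, ofAdd_one_pow_self, map_one, map_one]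

lemma trace_eq_zero_or_trace_eq_zero (hF : ¬ IsSquare (-1 : F))
    (hg : Subgroup.closure {g₁, g₂} = ⊤) {M₁ M₂ : SL(2, F)} (hM₁ : θ g₁ = M₁) (hM₂ : θ g₂ = M₂)
    (hdet : (M₁ * M₂ - M₂ * M₁ : Matrix (Fin 2) (Fin 2) F).det = 4) :
    (M₁ : Matrix (Fin 2) (Fin 2) F).trace = 0 ∨ (M₂ : Matrix (Fin 2) (Fin 2) F).trace = 0 := by
  by_contra! htrace
  have h2 := two_ne_zero_of_not_isSquare_neg_one hF
  have h4 := four_ne_zero_of_not_isSquare_neg_one hF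
  obtain ⟨A, B, hθA, hθB, hA, hBm⟩ := exists_lift_generators (m := m) (θ := θ)
    (hM₁ ▸ hM₂ ▸ not_commute_coe h2 htrace.1 (hdet ▸ h4))
  obtain ⟨η, hη⟩ : ∃ η, (B : Matrix (Fin 2) (Fin 2) F).trace = 2 * η :=
    ⟨_, (mul_div_cancel₀ _ h2).symm⟩
  obtain ⟨σ, hσ⟩ : ∃ σ, (A * B : Matrix (Fin 2) (Fin 2) F).trace = 2 * σ :=
    ⟨_, (mul_div_cancel₀ _ h2).symm⟩
  rw [charpoly_fin_two, hη, B.det_coe, map_one] at hBm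
  obtain ⟨φ, hφi, hφp⟩ := exists_coprod_hom_generic hBm
  obtain ⟨x, hx⟩ := QuotientGroup.mk_surjective (φ g₁)
  obtain ⟨z, hz⟩ := QuotientGroup.mk_surjective (φ g₂)
  have hxM := (coe_unitaryPairRepresentation_eq hA hη hσ hφi hφp hθA hθB hx.symm).trans hM₁
  have hzM := (coe_unitaryPairRepresentation_eq hA hη hσ hφi hφp hθA hθB hz.symm).trans hM₂
  have hdetxz : (reducedNorm (x * z - z * x : GenericAlgebra η)).eval σ = 4 := by
    rw [← det_commutator_unitaryPairRepresentation hA hη hσ,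
      det_mul_sub_mul_eq_of_coe_eq hxM hzM, hdet]
  rcases eval_re_eq_zero_or_eval_re_eq_zero_of_closure_eq_top hφi hφp hF hg hx.symm hz.symm hdetxz
    with h | h
  · exact htrace.1 (trace_eq_zero_of_coe_eq hxM
      (by rw [trace_unitaryPairRepresentation, h, mul_zero]))
  · exact htrace.2 (trace_eq_zero_of_coe_eq hzM
      (by rw [trace_unitaryPairRepresentation, h, mul_zero]))

end

end NoLift

/-- if `q ≡ 3 (mod 4)`, `q ≠ 3`, and `PSL(2,q)` is `(2,m)`-generated,
then with `G = C_2 ∗ C_m`, `H = PSL(2,q)` is a homomorphic image of `G` and some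
generating pair of `H` does not lift to a generating pair of `G` along any
homomorphism `G → H`. -/
theorem stmt11 (q m : ℕ) (hm : 0 < m)
    (F : Type) [Field F] [Fintype F] (hcard : Fintype.card F = q)
    (hq3mod4 : q % 4 = 3) (hq3 : q ≠ 3)
    (hgen : ∃ h1 h2 : PSL2 F, Subgroup.closure {h1, h2} = ⊤ ∧ h1 ^ 2 = 1 ∧ h2 ^ m = 1) :
    (∃ φ : Monoid.Coprod (Cyc 2) (Cyc m) →* PSL2 F, Function.Surjective φ) ∧
    ∃ h1 h2 : PSL2 F, Subgroup.closure {h1, h2} = ⊤ ∧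
      ∀ (θ : Monoid.Coprod (Cyc 2) (Cyc m) →* PSL2 F)
        (g1 g2 : Monoid.Coprod (Cyc 2) (Cyc m)),
        Subgroup.closure {g1, g2} = ⊤ → (θ g1, θ g2) ≠ (h1, h2) := by
  subst hcard
  have hF : ¬ IsSquare (-1 : F) := fun h ↦ FiniteField.isSquare_neg_one_iff.mp h hq3mod4
  have hlt : 3 < Nat.card F := by
    rw [Nat.card_eq_fintype_card]
    omega
  obtain ⟨h₁, h₂, hh, hh₁, hh₂⟩ := hgen
  refine ⟨exists_surjective_coprod_hom hh hh₁ hh₂, ?_⟩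
  obtain ⟨M₁, M₂, hM, htr₁, htr₂, hdet⟩ :=
    exists_closure_eq_top_and_det_mul_sub_mul_eq_four hF hlt
  refine ⟨M₁, M₂, hM, fun θ g₁ g₂ hg hθ ↦ ?_⟩
  obtain ⟨hθ₁, hθ₂⟩ := Prod.mk.inj hθ
  exact (trace_eq_zero_or_trace_eq_zero hF hg hθ₁ hθ₂ hdet).elim htr₁ htr₂
end

section
/- If A, B ∈ SL(2,F_5) generate SL(2,F_5) (i.e. ⟨A,B⟩ = SL(2,F_5)) and A³, B³ ∈ {I, −I}, then tr([A,B]) ≠ −2. -/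
instance : Fact (Nat.Prime 5) := ⟨by norm_num⟩

/-!
Write `x = tr A`, `y = tr B`, `z = tr (A * B)`. By Cayley–Hamilton,
`A ^ 3 = (x ^ 2 - 1) • A - x • 1`, so if `A ^ 3` commutes with `B`, then `x ^ 2 = 1` or `A` itself
commutes with `B`; likewise for `B`. If `A` and `B` commute, the commutator has trace `2`. Otherwise
`x ^ 2 = y ^ 2 = 1`, and Fricke's formula `tr [A, B] = x ^ 2 + y ^ 2 + z ^ 2 - x * y * z - 2` shows
that `tr [A, B] = -2` would make `z` a root of `Z ^ 2 - x * y * Z + 2`, whose discriminant is `-7`.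
Modulo `5` this is not a square.
-/

section FinTwo

open Matrix

variable {R : Type*} [CommRing R]

theorem adjugate_fin_two_eq_trace_smul_one_sub (M : Matrix (Fin 2) (Fin 2) R) :
    M.adjugate = M.trace • (1 : Matrix (Fin 2) (Fin 2) R) - M := by
  rw [adjugate_fin_two, one_fin_two, trace_fin_two]
  ext i j
  fin_cases i <;> fin_cases j <;> simp

theorem sq_fin_two_eq_trace_smul_sub_det_smul_one (M : Matrix (Fin 2) (Fin 2) R) :
    M ^ 2 = M.trace • M - M.det • (1 : Matrix (Fin 2) (Fin 2) R) := by
  have h : M * (M.trace • (1 : Matrix (Fin 2) (Fin 2) R) - M) = M.det • 1 := by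
    rw [← adjugate_fin_two_eq_trace_smul_one_sub, mul_adjugate]
  rw [← h, mul_sub, mul_smul_comm, mul_one, sub_sub_cancel, sq]

theorem pow_three_fin_two_eq_smul_sub_smul_one (M : Matrix (Fin 2) (Fin 2) R) :
    M ^ 3 = (M.trace ^ 2 - M.det) • M - (M.trace * M.det) • (1 : Matrix (Fin 2) (Fin 2) R) := by
  rw [pow_succ, sq_fin_two_eq_trace_smul_sub_det_smul_one, sub_mul, smul_mul_assoc,
    smul_mul_assoc, one_mul, ← sq, sq_fin_two_eq_trace_smul_sub_det_smul_one]
  module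

theorem trace_mul_add_trace_adjugate_mul_fin_two (M N : Matrix (Fin 2) (Fin 2) R) :
    (M * N).trace + (M.adjugate * N).trace = M.trace * N.trace := by
  rw [adjugate_fin_two_eq_trace_smul_one_sub, sub_mul, trace_sub, add_sub_cancel, smul_mul_assoc,
    one_mul, trace_smul, smul_eq_mul]

theorem trace_sq_eq_det_or_commute_of_commute_pow_three [IsDomain R]
    {M N : Matrix (Fin 2) (Fin 2) R} (h : Commute (M ^ 3) N) :
    M.trace ^ 2 = M.det ∨ Commute M N := by
  have hsmul : (M.trace ^ 2 - M.det) • (M * N - N * M) = 0 := by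
    have h' := h.eq
    rw [pow_three_fin_two_eq_smul_sub_smul_one, sub_mul, mul_sub] at h'
    simp only [smul_mul_assoc, mul_smul_comm, one_mul, mul_one, sub_left_inj] at h'
    rw [smul_sub, h', sub_self]
  exact (smul_eq_zero.mp hsmul).imp sub_eq_zero.mp sub_eq_zero.mp

end FinTwo

namespace SL2

open Matrix MatrixGroups

variable {R : Type*} [CommRing R]

local notation "tr" A:max => Matrix.trace ((A : SL(2, R)) : Matrix (Fin 2) (Fin 2) R)

theorem trace_mul_comm (A B : SL(2, R)) : tr (A * B) = tr (B * A) :=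
  Matrix.trace_mul_comm _ _

theorem trace_mul_add_trace_inv_mul (A B : SL(2, R)) :
    tr (A * B) + tr (A⁻¹ * B) = tr A * tr B := by
  simpa only [Matrix.SpecialLinearGroup.coe_mul, Matrix.SpecialLinearGroup.coe_inv] using
    trace_mul_add_trace_adjugate_mul_fin_two (A : Matrix (Fin 2) (Fin 2) R) B

theorem trace_one : tr (1 : SL(2, R)) = 2 := by
  simp

theorem trace_inv (A : SL(2, R)) : tr A⁻¹ = tr A := by
  have h := trace_mul_add_trace_inv_mul A 1
  rw [mul_one, mul_one, trace_one] at h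
  linear_combination h

theorem trace_conj (A B : SL(2, R)) : tr (B⁻¹ * A * B) = tr A := by
  rw [trace_mul_comm, mul_inv_cancel_left]

theorem trace_mul_self (A : SL(2, R)) : tr (A * A) = tr A ^ 2 - 2 := by
  have h := trace_mul_add_trace_inv_mul A A
  rw [inv_mul_cancel, trace_one] at h
  linear_combination h

theorem trace_commutator (A B : SL(2, R)) :
    tr (A⁻¹ * B⁻¹ * A * B) =
      tr A ^ 2 + tr B ^ 2 + tr (A * B) ^ 2 - tr A * tr B * tr (A * B) - 2 := by
  have hcomm : tr (B * A * (B⁻¹ * A)) + tr (A⁻¹ * B⁻¹ * A * B) = tr A ^ 2 := by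
    have h := trace_mul_add_trace_inv_mul A (B⁻¹ * A * B)
    have hrot : tr (B * A * (B⁻¹ * A)) = tr (A * (B⁻¹ * A * B)) := by
      rw [mul_assoc B, trace_mul_comm B]
      simp only [mul_assoc]
    rw [trace_conj, ← hrot, ← sq] at h
    simpa only [mul_assoc] using h
  have hsplit : tr (B * A * (B⁻¹ * A)) + (tr B ^ 2 - 2) = tr (A * B) * tr (B⁻¹ * A) := by
    have h := trace_mul_add_trace_inv_mul (B * A) (B⁻¹ * A)
    have hconj : (B * A)⁻¹ * (B⁻¹ * A) = A⁻¹ * (B⁻¹ * B⁻¹) * A := by group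
    rwa [hconj, trace_conj, trace_mul_self, trace_inv, trace_mul_comm B A] at h
  have hinv : tr (A * B) + tr (B⁻¹ * A) = tr B * tr A := by
    rw [trace_mul_comm A B, trace_mul_add_trace_inv_mul]
  linear_combination hcomm - hsplit - tr (A * B) * hinv

theorem trace_commutator_of_commute {A B : SL(2, R)} (h : Commute A B) :
    tr (A⁻¹ * B⁻¹ * A * B) = 2 := by
  have hone : A⁻¹ * B⁻¹ * A * B = 1 := by
    rw [mul_assoc, h.eq]
    group
  rw [hone, trace_one]

theorem trace_sq_eq_one_or_commute_of_commute_pow_three [IsDomain R] {A B : SL(2, R)}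
    (h : Commute (A ^ 3) B) : tr A ^ 2 = 1 ∨ Commute A B := by
  have hmat : Commute ((A : Matrix (Fin 2) (Fin 2) R) ^ 3) B := congrArg Subtype.val h.eq
  refine (trace_sq_eq_det_or_commute_of_commute_pow_three hmat).imp (fun ht => ?_) fun hc => ?_
  · rw [ht, A.det_coe]
  · exact Subtype.ext hc.eq

theorem commute_of_coe_eq_one_or_neg_one {A : SL(2, R)}
    (hA : (A : Matrix (Fin 2) (Fin 2) R) = 1 ∨ (A : Matrix (Fin 2) (Fin 2) R) = -1)
    (B : SL(2, R)) : Commute A B := by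
  apply Subtype.ext
  rcases hA with hA | hA <;> simp [hA]

end SL2

open MatrixGroups in
theorem stmt12_general {R : Type*} [CommRing R] [IsDomain R] (hR : ¬ IsSquare (-7 : R))
    {A B : SL(2, R)} (hA : Commute (A ^ 3) B) (hB : Commute A (B ^ 3)) :
    Matrix.trace ((A⁻¹ * B⁻¹ * A * B : SL(2, R)) : Matrix (Fin 2) (Fin 2) R) ≠ -2 := by
  intro htr
  by_cases hAB : Commute A B
  · rw [SL2.trace_commutator_of_commute hAB] at htr
    exact hR ⟨1, by linear_combination -2 * htr⟩
  · have hx := (SL2.trace_sq_eq_one_or_commute_of_commute_pow_three hA).resolve_right hAB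
    have hy := (SL2.trace_sq_eq_one_or_commute_of_commute_pow_three hB.symm).resolve_right
      (hAB ·.symm)
    rw [SL2.trace_commutator, hx, hy] at htr
    set x := Matrix.trace A.1
    set y := Matrix.trace B.1
    set z := Matrix.trace (A * B).1
    have hdisc : (2 * z - x * y) ^ 2 = -7 := by
      linear_combination 4 * htr + y ^ 2 * hx + hy
    exact hR ⟨2 * z - x * y, by rw [← hdisc, sq]⟩

/-- if `A, B` generate `SL(2,5)` and `A³, B³ ∈ {I, -I}`, then
`tr([A,B]) ≠ -2`. -/
theorem stmt12 (A B : SL2 (ZMod 5))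
    (hgen : Subgroup.closure {A, B} = ⊤)
    (hA : ((A ^ 3 : SL2 (ZMod 5)) : Matrix (Fin 2) (Fin 2) (ZMod 5)) = 1 ∨
          ((A ^ 3 : SL2 (ZMod 5)) : Matrix (Fin 2) (Fin 2) (ZMod 5)) = -1)
    (hB : ((B ^ 3 : SL2 (ZMod 5)) : Matrix (Fin 2) (Fin 2) (ZMod 5)) = 1 ∨
          ((B ^ 3 : SL2 (ZMod 5)) : Matrix (Fin 2) (Fin 2) (ZMod 5)) = -1) :
    Matrix.trace ((A⁻¹ * B⁻¹ * A * B : SL2 (ZMod 5)) : Matrix (Fin 2) (Fin 2) (ZMod 5)) ≠ -2 :=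
  stmt12_general (by decide : ¬ IsSquare (-7 : ZMod 5))
    (SL2.commute_of_coe_eq_one_or_neg_one hA B) (SL2.commute_of_coe_eq_one_or_neg_one hB A).symm
end
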